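/- arXiv:2404.11837 — 3 statements merged into one kernel-verified Lean document; each statement's English description precedes it below -/
import Mathlib

section
/- Let Δ be a finite abstract simplicial complex on the vertex set {1,…,N} that is pure of dimension d, i.e. every maximal face has exactly d elements; write Δ_j for the set of j-element faces. Let v : {1,…,N} → ℝ^n be such that for every face σ ∈ Δ the vectors {v_k : k ∈ σ} are linearly independent, and such that the cones cone(σ) = {Σ_{k∈σ} c_k v_k : c_k ≥ 0} form a fan, meaning cone(σ) ∩ cone(σ′) = cone(σ ∩ σ′) for all σ, σ′ ∈ Δ. Then the linear map Φ from the dual vector space (CH^d(Δ))* to the space of real-valued functions on Δ_d, defined by Φ(φ) = (φ(∂_σ))_{σ∈Δ_d}, is injective with image exactly the space MW_d(Δ) of Minkowski weights of degree d; that is, Φ : (CH^d(Δ))* → MW_d(Δ) is a linear isomorphism. -/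
open MvPolynomial

noncomputable section

/-- The Stanley–Reisner ideal `I_Δ ⊆ ℝ[∂_1,…,∂_N]`, generated by the monomials
`∏_{k∈S} ∂_k` over non-faces `S ∉ Δ`. -/
def srIdeal (N : ℕ) (Δ : Finset (Finset (Fin N))) : Ideal (MvPolynomial (Fin N) ℝ) :=
  Ideal.span {p | ∃ S : Finset (Fin N), S ∉ Δ ∧ p = ∏ k ∈ S, X k}

/-- The ideal `I_Δ + (Θ)`, where `Θ` is spanned by the linear forms
`θ_j = Σ_k v_k(j)·∂_k`, `j = 1,…,n`. -/
def chowIdeal (N n : ℕ) (Δ : Finset (Finset (Fin N))) (v : Fin N → Fin n → ℝ) :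
    Ideal (MvPolynomial (Fin N) ℝ) :=
  srIdeal N Δ ⊔ Ideal.span (Set.range fun j : Fin n => ∑ k : Fin N, C (v k j) * X k)

/-- The Chow ring `CH(Δ) = ℝ[∂_1,…,∂_N]/(I_Δ + (Θ))`. -/
abbrev ChowRing (N n : ℕ) (Δ : Finset (Finset (Fin N))) (v : Fin N → Fin n → ℝ) :=
  MvPolynomial (Fin N) ℝ ⧸ chowIdeal N n Δ v

/-- The degree-`d` graded piece `CH^d(Δ)`: the image in the quotient of the space of
homogeneous polynomials of degree `d`. -/
def chowDeg (N n d : ℕ) (Δ : Finset (Finset (Fin N))) (v : Fin N → Fin n → ℝ) :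
    Submodule ℝ (ChowRing N n Δ v) :=
  Submodule.map (Ideal.Quotient.mkₐ ℝ (chowIdeal N n Δ v)).toLinearMap
    (homogeneousSubmodule (Fin N) ℝ d)

/-- The set `Δ_d` of `d`-element faces of `Δ`. -/
abbrev FaceD (N d : ℕ) (Δ : Finset (Finset (Fin N))) :=
  {σ : Finset (Fin N) // σ ∈ Δ ∧ σ.card = d}

/-- The class `∂_σ = ∏_{k∈σ} ∂_k ∈ CH^d(Δ)` of a `d`-element face `σ`. -/
def faceClass (N n d : ℕ) (Δ : Finset (Finset (Fin N))) (v : Fin N → Fin n → ℝ)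
    (σ : FaceD N d Δ) : chowDeg N n d Δ v :=
  ⟨Ideal.Quotient.mk (chowIdeal N n Δ v) (∏ k ∈ σ.1, X k),
    ⟨∏ k ∈ σ.1, X k, by
      refine SetLike.mem_coe.mpr ?_
      rw [mem_homogeneousSubmodule]
      have h := MvPolynomial.IsHomogeneous.prod σ.1 (fun k => (X k : MvPolynomial (Fin N) ℝ))
        (fun _ => 1) (fun k _ => isHomogeneous_X ℝ k)
      simpa [σ.2.2] using h, rfl⟩⟩

/-- The linear map `Φ : (CH^d(Δ))* → (functions on Δ_d)`, `Φ(φ) = (φ(∂_σ))_σ`. -/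
def PhiMap (N n d : ℕ) (Δ : Finset (Finset (Fin N))) (v : Fin N → Fin n → ℝ) :
    Module.Dual ℝ (chowDeg N n d Δ v) →ₗ[ℝ] (FaceD N d Δ → ℝ) where
  toFun φ := fun σ => φ (faceClass N n d Δ v σ)
  map_add' φ ψ := by ext σ; simp
  map_smul' c φ := by ext σ; simp

/-- The space `MW_d(Δ)` of Minkowski weights of degree `d`: for every face `τ` with
`|τ| = d − 1`, the vector `Σ_{σ∈Δ_d, τ⊂σ} w_σ · v_{i_σ}` lies in the span of
`{v_k : k ∈ τ}` (here `v_{i_σ} = Σ_{k∈σ∖τ} v_k`, since `σ∖τ` is a singleton). -/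
def mwSet (N n d : ℕ) (Δ : Finset (Finset (Fin N))) (v : Fin N → Fin n → ℝ) :
    Set (FaceD N d Δ → ℝ) :=
  {w | ∀ τ : Finset (Fin N), τ ∈ Δ → τ.card + 1 = d →
    (∑ σ : FaceD N d Δ, (if τ ⊆ σ.1 then w σ else 0) • ∑ k ∈ σ.1 \ τ, v k)
      ∈ Submodule.span ℝ (v '' ↑τ)}

/-- The cone spanned by `{v_k : k ∈ σ}`. -/
def coneOf (N n : ℕ) (v : Fin N → Fin n → ℝ) (σ : Finset (Fin N)) : Set (Fin n → ℝ) :=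
  {x | ∃ c : Fin N → ℝ, (∀ k, 0 ≤ c k) ∧ x = ∑ k ∈ σ, c k • v k}

namespace MWProof

lemma exists_dual_family (N n : ℕ) (Δ : Finset (Finset (Fin N))) (v : Fin N → Fin n → ℝ)
    (hindep : ∀ σ ∈ Δ, LinearIndependent ℝ (fun k : {x : Fin N // x ∈ σ} => v k)) :
    ∃ L : Finset (Fin N) → Fin N → ((Fin n → ℝ) →ₗ[ℝ] ℝ),
      ∀ S ∈ Δ, ∀ k ∈ S, ∀ j ∈ S, L S k (v j) = if j = k then 1 else 0 := by
  have h : ∀ S : Finset (Fin N), ∀ k : Fin N, ∃ l : (Fin n → ℝ) →ₗ[ℝ] ℝ,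
      S ∈ Δ → k ∈ S → ∀ j ∈ S, l (v j) = if j = k then 1 else 0 := by
    intro S k
    by_cases hS : S ∈ Δ
    swap
    · exact ⟨0, fun h => absurd h hS⟩
    by_cases hk : k ∈ S
    swap
    · exact ⟨0, fun _ h => absurd h hk⟩
    let b := Module.Basis.span (hindep S hS)
    obtain ⟨l, hl⟩ := LinearMap.exists_extend (b.coord ⟨k, hk⟩)
    refine ⟨l, fun _ _ j hj => ?_⟩
    have h1 := LinearMap.congr_fun hl (b ⟨j, hj⟩)
    have h2 : ((b ⟨j, hj⟩ : Submodule.span ℝ _) : Fin n → ℝ) = v j :=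
      congrArg Subtype.val (Module.Basis.span_apply (hindep S hS) ⟨j, hj⟩)
    simp only [LinearMap.comp_apply, Submodule.subtype_apply, h2] at h1
    rw [h1]
    simp [Module.Basis.coord_apply, Finsupp.single_apply]
  choose L hL using h
  exact ⟨L, fun S hS k hk => hL S k hS hk⟩

lemma supp_add {N : ℕ} (m : Fin N →₀ ℕ) (a : Fin N) :
    (m + Finsupp.single a 1).support = insert a m.support := by
  ext x
  simp only [Finsupp.mem_support_iff, Finsupp.add_apply, Finset.mem_insert,
    Finsupp.single_apply]
  by_cases h : a = x
  · simp [h]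
  · simp [h, Ne.symm h]

lemma supp_sub {N : ℕ} (m : Fin N →₀ ℕ) (k : Fin N) (hk : 2 ≤ m k) :
    (m - Finsupp.single k 1).support = m.support := by
  ext x
  simp only [Finsupp.mem_support_iff, Finsupp.tsub_apply, Finsupp.single_apply]
  by_cases h : k = x
  · subst h; simp; omega
  · simp [h]

lemma sub_add {N : ℕ} (m : Fin N →₀ ℕ) (k : Fin N) (hk : 1 ≤ m k) :
    m - Finsupp.single k 1 + Finsupp.single k 1 = m := by
  apply tsub_add_cancel_of_le
  rw [Finsupp.single_le_iff]; exact hk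

open Classical in
/-- recursively defined functional on monomials -/
def phi (N n : ℕ) (Δ : Finset (Finset (Fin N))) (v : Fin N → Fin n → ℝ)
    (w : Finset (Fin N) → ℝ) (L : Finset (Fin N) → Fin N → ((Fin n → ℝ) →ₗ[ℝ] ℝ))
    (m : Fin N →₀ ℕ) : ℝ :=
  if m.support ∈ Δ then
    if h : ∃ k, 2 ≤ m k then
      - ∑ a : {a // a ∈ m.supportᶜ}, L m.support h.choose (v a) *
          phi N n Δ v w L (m - Finsupp.single h.choose 1 + Finsupp.single a.1 1)
    else w m.support
  else 0
termination_by N - m.support.card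
decreasing_by
  have ha := a.2
  rw [Finset.mem_compl] at ha
  rw [supp_add, supp_sub _ _ h.choose_spec, Finset.card_insert_of_notMem ha]
  have := Finset.card_le_univ (insert a.1 m.support)
  rw [Finset.card_insert_of_notMem ha, Fintype.card_fin] at this
  omega

section
variable {N n : ℕ} {Δ : Finset (Finset (Fin N))} {v : Fin N → Fin n → ℝ}
    {w : Finset (Fin N) → ℝ} {L : Finset (Fin N) → Fin N → ((Fin n → ℝ) →ₗ[ℝ] ℝ)}

lemma phi_zero (m : Fin N →₀ ℕ) (h : m.support ∉ Δ) : phi N n Δ v w L m = 0 := by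
  rw [phi, if_neg h]

lemma phi_sqfree (m : Fin N →₀ ℕ) (h : m.support ∈ Δ) (h2 : ∀ k, m k ≤ 1) :
    phi N n Δ v w L m = w m.support := by
  rw [phi, if_pos h, dif_neg]
  rintro ⟨k, hk⟩
  have := h2 k
  omega

lemma phi_rec (m : Fin N →₀ ℕ) (h : m.support ∈ Δ) (h2 : ∃ k, 2 ≤ m k) :
    ∃ k, 2 ≤ m k ∧ phi N n Δ v w L m = - ∑ a ∈ m.supportᶜ, L m.support k (v a) *
      phi N n Δ v w L (m - Finsupp.single k 1 + Finsupp.single a 1) := by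
  refine ⟨h2.choose, h2.choose_spec, ?_⟩
  rw [phi, if_pos h, dif_pos h2]
  congr 1
  exact Finset.sum_coe_sort m.supportᶜ (fun a => L m.support h2.choose (v a) *
      phi N n Δ v w L (m - Finsupp.single h2.choose 1 + Finsupp.single a 1))

/-- key symmetric formula -/
lemma key (hcomplex : ∀ σ ∈ Δ, ∀ τ ⊆ σ, τ ∈ Δ)
    (hL : ∀ S ∈ Δ, ∀ k ∈ S, ∀ j ∈ S, L S k (v j) = if j = k then 1 else 0)
    (F : (Fin N →₀ ℕ) → ℝ)
    (m : Fin N →₀ ℕ) (hm : m.support ∈ Δ)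
    (hR : ∀ a ∉ m.support, ∀ l : (Fin n → ℝ) →ₗ[ℝ] ℝ,
      ∑ k, l (v k) * F (m + Finsupp.single a 1 + Finsupp.single k 1) = 0)
    (j : Fin N) (hj : j ∈ m.support) (l : (Fin n → ℝ) →ₗ[ℝ] ℝ) :
    ∑ a ∈ m.supportᶜ, l (v a) * F (m + Finsupp.single j 1 + Finsupp.single a 1) =
    - ∑ a ∈ m.supportᶜ, ∑ b ∈ m.supportᶜ, l (v a) * L m.support j (v b) *
        F (m + Finsupp.single a 1 + Finsupp.single b 1) := by
  rw [← Finset.sum_neg_distrib]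
  refine Finset.sum_congr rfl fun a ha => ?_
  rw [Finset.mem_compl] at ha
  have h := hR a ha (L m.support j)
  rw [← Finset.sum_add_sum_compl m.support] at h
  have h1 : ∑ k ∈ m.support, L m.support j (v k) *
      F (m + Finsupp.single a 1 + Finsupp.single k 1)
      = F (m + Finsupp.single j 1 + Finsupp.single a 1) := by
    rw [Finset.sum_eq_single_of_mem j hj]
    · rw [hL _ hm j hj j hj, if_pos rfl, one_mul, add_right_comm]
    · intro k hk hkj
      rw [hL _ hm j hj k hk, if_neg hkj, zero_mul]
  rw [h1] at h
  rw [eq_neg_of_add_eq_zero_left h, mul_neg, Finset.mul_sum]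
  simp only [mul_assoc]

lemma relation (hcomplex : ∀ σ ∈ Δ, ∀ τ ⊆ σ, τ ∈ Δ)
    (hL : ∀ S ∈ Δ, ∀ k ∈ S, ∀ j ∈ S, L S k (v j) = if j = k then 1 else 0) (d : ℕ)
    (hw0 : ∀ S ∉ Δ, w S = 0)
    (hw : ∀ τ ∈ Δ, τ.card + 1 = d → ∀ l : (Fin n → ℝ) →ₗ[ℝ] ℝ, (∀ k ∈ τ, l (v k) = 0) →
      ∑ a ∈ τᶜ, l (v a) * w (insert a τ) = 0) :
    ∀ (c : ℕ) (m : Fin N →₀ ℕ), N - m.support.card = c → m.degree + 1 = d →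
    ∀ l : (Fin n → ℝ) →ₗ[ℝ] ℝ,
      ∑ k, l (v k) * phi N n Δ v w L (m + Finsupp.single k 1) = 0 := by
  intro c
  induction c using Nat.strong_induction_on with
  | _ c ih =>
  intro m hc hd l
  by_cases hm : m.support ∈ Δ
  swap
  · refine Finset.sum_eq_zero fun k _ => ?_
    rw [phi_zero, mul_zero]
    rw [supp_add]
    exact fun h => hm (hcomplex _ h _ (Finset.subset_insert _ _))
  -- relation available for `m₂ + a` where `m = m₂ + j`
  have hrel : ∀ m₂ : Fin N →₀ ℕ, m₂.support = m.support → m₂.degree + 2 = d →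
      ∀ a ∉ m₂.support, ∀ l : (Fin n → ℝ) →ₗ[ℝ] ℝ, ∑ k, l (v k) *
        phi N n Δ v w L (m₂ + Finsupp.single a 1 + Finsupp.single k 1) = 0 := by
    intro m₂ hs hd2 a ha l
    refine ih (N - (m₂ + Finsupp.single a 1).support.card) ?_ _ rfl ?_ l
    · have := Finset.card_le_univ (insert a m₂.support)
      rw [supp_add]
      rw [Finset.card_insert_of_notMem ha, Fintype.card_fin] at *
      rw [hs] at *
      omega
    · rw [map_add, Finsupp.degree_single]; omega
  have hdeg : ∀ k, 2 ≤ m k → (m - Finsupp.single k 1).degree + 2 = d := by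
    intro k hk
    have := congrArg Finsupp.degree (sub_add m k (by omega))
    rw [map_add, Finsupp.degree_single] at this
    omega
  have hA : ∀ l : (Fin n → ℝ) →ₗ[ℝ] ℝ, (∀ k ∈ m.support, l (v k) = 0) →
      ∑ a ∈ m.supportᶜ, l (v a) * phi N n Δ v w L (m + Finsupp.single a 1) = 0 := by
    intro l hl
    by_cases hsq : ∃ k, 2 ≤ m k
    · obtain ⟨k, hk⟩ := hsq
      have hs := supp_sub m k hk
      have hR := hrel _ hs (hdeg k hk)
      have := key hcomplex hL (phi N n Δ v w L) (m - Finsupp.single k 1) (by rwa [hs]) hR k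
        (by rw [hs, Finsupp.mem_support_iff]; omega) l
      rw [sub_add m k (by omega)] at this
      rw [hs] at this hR
      rw [this, neg_eq_zero, Finset.sum_comm]
      refine Finset.sum_eq_zero fun b hb => ?_
      have h := hR b (by simpa using hb) l
      rw [← Finset.sum_add_sum_compl m.support, Finset.sum_eq_zero, zero_add] at h
      · calc _ = L m.support k (v b) * ∑ a ∈ m.supportᶜ, l (v a) * phi N n Δ v w L
              (m - Finsupp.single k 1 + Finsupp.single b 1 + Finsupp.single a 1) := by
              rw [Finset.mul_sum]
              refine Finset.sum_congr rfl fun a _ => ?_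
              rw [add_right_comm]; ring
          _ = 0 := by rw [h, mul_zero]
      · intro k hk
        rw [hl k hk, zero_mul]
    · push Not at hsq
      have hcard : m.support.card = m.degree := by
        rw [Finsupp.degree_apply, Finset.card_eq_sum_ones]
        refine Finset.sum_congr rfl fun k hk => ?_
        rw [Finsupp.mem_support_iff] at hk
        have := hsq k
        omega
      rw [← hw m.support hm (by omega) l hl]
      refine Finset.sum_congr rfl fun a ha => ?_
      congr 1
      rw [← supp_add]
      by_cases h : (m + Finsupp.single a 1).support ∈ Δ
      · apply phi_sqfree _ h
        intro k
        have := hsq k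
        simp only [Finset.mem_compl, Finsupp.mem_support_iff, not_not] at ha
        rw [Finsupp.add_apply, Finsupp.single_apply]
        split_ifs with hak
        · subst hak; omega
        · omega
      · rw [phi_zero _ h, hw0 _ h]
  have hB : ∀ k ∈ m.support, phi N n Δ v w L (m + Finsupp.single k 1) =
      - ∑ a ∈ m.supportᶜ, L m.support k (v a) *
        phi N n Δ v w L (m + Finsupp.single a 1) := by
    intro k hk
    have hs : (m + Finsupp.single k 1).support = m.support := by
      rw [supp_add, Finset.insert_eq_of_mem hk]
    obtain ⟨j, hj, h⟩ := phi_rec (v := v) (w := w) (L := L) (m + Finsupp.single k 1)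
      (by rwa [hs]) ⟨k, by
        rw [Finsupp.mem_support_iff] at hk
        simp; omega⟩
    rw [h, hs]
    by_cases hjk : j = k
    · subst hjk
      rw [add_tsub_cancel_right]
    · have hj2 : 2 ≤ m j := by
        rw [Finsupp.add_apply, Finsupp.single_apply, if_neg (Ne.symm hjk)] at hj
        simpa using hj
      have hs2 := supp_sub m j hj2
      have hjs : j ∈ m.support := by rw [Finsupp.mem_support_iff]; omega
      have hR := hrel _ hs2 (hdeg j hj2)
      have e1 := key hcomplex hL (phi N n Δ v w L) (m - Finsupp.single j 1) (by rwa [hs2]) hR k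
        (by rwa [hs2]) (L m.support j)
      have e2 := key hcomplex hL (phi N n Δ v w L) (m - Finsupp.single j 1) (by rwa [hs2]) hR j
        (by rwa [hs2]) (L m.support k)
      rw [sub_add m j (by omega)] at e2
      have e3 : m + Finsupp.single k 1 - Finsupp.single j 1
          = m - Finsupp.single j 1 + Finsupp.single k 1 := by
        conv_lhs => rw [← sub_add m j (by omega)]
        rw [add_right_comm, add_tsub_cancel_right]
      rw [hs2] at e1 e2
      rw [e3, e1, e2, Finset.sum_comm]
      congr 2
      refine Finset.sum_congr rfl fun a _ => Finset.sum_congr rfl fun b _ => ?_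
      rw [add_right_comm]; ring
  rw [← Finset.sum_add_sum_compl m.support]
  have hfin := hA (l - ∑ k ∈ m.support, l (v k) • L m.support k) (by
    intro j hj
    rw [LinearMap.sub_apply, LinearMap.sum_apply, Finset.sum_eq_single_of_mem j hj]
    · rw [LinearMap.smul_apply, hL _ hm j hj j hj]; simp
    · intro k hk hkj
      rw [LinearMap.smul_apply, hL _ hm k hk j hj, if_neg (Ne.symm hkj), smul_zero])
  rw [← hfin, Finset.sum_congr rfl (fun k hk => by rw [hB k hk])]
  simp only [LinearMap.sub_apply, LinearMap.sum_apply, LinearMap.smul_apply, smul_eq_mul,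
    sub_mul, Finset.sum_sub_distrib, Finset.sum_mul, mul_neg, Finset.sum_neg_distrib,
    Finset.mul_sum]
  rw [Finset.sum_comm]
  simp only [mul_assoc]
  ring

end

section
variable (N n d : ℕ) (Δ : Finset (Finset (Fin N))) (v : Fin N → Fin n → ℝ)

lemma prod_X_eq (S : Finset (Fin N)) :
    (∏ k ∈ S, X k : MvPolynomial (Fin N) ℝ)
      = monomial (∑ k ∈ S, Finsupp.single k 1) 1 := by
  rw [monomial_sum_one]; rfl

lemma sum_single_apply (S : Finset (Fin N)) (j : Fin N) :
    (∑ k ∈ S, Finsupp.single k 1 : Fin N →₀ ℕ) j = if j ∈ S then 1 else 0 := by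
  rw [Finsupp.finsetSum_apply]
  simp [Finsupp.single_apply]

lemma supp_sum_single (S : Finset (Fin N)) :
    (∑ k ∈ S, Finsupp.single k 1 : Fin N →₀ ℕ).support = S := by
  ext j
  rw [Finsupp.mem_support_iff, sum_single_apply]
  simp

lemma eq_sum_single (m : Fin N →₀ ℕ) (h : ∀ k, m k ≤ 1) :
    m = ∑ k ∈ m.support, Finsupp.single k 1 := by
  ext j
  rw [sum_single_apply]
  have := h j
  split_ifs with hj
  · rw [Finsupp.mem_support_iff] at hj; omega
  · simpa using hj

lemma theta_mem (l : (Fin n → ℝ) →ₗ[ℝ] ℝ) :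
    ∑ k, C (l (v k)) * X k ∈ chowIdeal N n Δ v := by
  have h : ∑ k, C (l (v k)) * X k = ∑ j : Fin n, C (l (Pi.single j 1)) *
      ∑ k : Fin N, C (v k j) * (X k : MvPolynomial (Fin N) ℝ) := by
    simp only [Finset.mul_sum]
    rw [Finset.sum_comm]
    refine Finset.sum_congr rfl fun k _ => ?_
    have : l (v k) = ∑ j, l (Pi.single j 1) * v k j := by
      conv_lhs => rw [pi_eq_sum_univ' (v k), map_sum]
      refine Finset.sum_congr rfl fun j _ => ?_
      rw [map_smul, smul_eq_mul, mul_comm]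
    rw [this, map_sum, Finset.sum_mul]
    simp only [map_mul, mul_assoc]
  rw [h]
  refine Ideal.sum_mem _ fun j _ => Ideal.mul_mem_left _ _ ?_
  exact Ideal.mem_sup_right (Ideal.subset_span ⟨j, rfl⟩)

lemma nonface_mem (m : Fin N →₀ ℕ) (h : m.support ∉ Δ) :
    monomial m (1 : ℝ) ∈ chowIdeal N n Δ v := by
  have : monomial m (1 : ℝ) = monomial (m - ∑ k ∈ m.support, Finsupp.single k 1) 1 *
      ∏ k ∈ m.support, X k := by
    rw [prod_X_eq, monomial_mul, one_mul, tsub_add_cancel_of_le]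
    intro j
    rw [sum_single_apply]
    split_ifs with hj
    · rw [Finsupp.mem_support_iff] at hj; omega
    · omega
  rw [this]
  exact Ideal.mul_mem_left _ _ (Ideal.mem_sup_left (Ideal.subset_span ⟨_, h, rfl⟩))

/-- The linear relation satisfied by a functional on the Chow ring. -/
lemma rel_of_functional (g : ChowRing N n Δ v →ₗ[ℝ] ℝ) (m : Fin N →₀ ℕ)
    (l : (Fin n → ℝ) →ₗ[ℝ] ℝ) :
    ∑ k, l (v k) * g (Ideal.Quotient.mkₐ ℝ (chowIdeal N n Δ v)
      (monomial (m + Finsupp.single k 1) 1)) = 0 := by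
  have h := Ideal.mul_mem_left _ (monomial m (1 : ℝ)) (theta_mem N n Δ v l)
  have h2 : Ideal.Quotient.mkₐ ℝ (chowIdeal N n Δ v)
      (monomial m (1 : ℝ) * ∑ k, C (l (v k)) * X k) = 0 := by
    exact Ideal.Quotient.eq_zero_iff_mem.mpr h
  have h3 : monomial m (1 : ℝ) * ∑ k, C (l (v k)) * X k
      = ∑ k, l (v k) • monomial (m + Finsupp.single k 1) (1 : ℝ) := by
    rw [Finset.mul_sum]
    refine Finset.sum_congr rfl fun k _ => ?_
    rw [X, C_mul_monomial, monomial_mul, smul_monomial]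
    simp
  rw [h3, map_sum] at h2
  have h4 := congrArg g h2
  rw [map_sum, map_zero] at h4
  rw [← h4]
  refine Finset.sum_congr rfl fun k _ => ?_
  rw [map_smul, map_smul, smul_eq_mul]

lemma inj_aux (hindep : ∀ σ ∈ Δ, LinearIndependent ℝ (fun k : {x : Fin N // x ∈ σ} => v k))
    (g : ChowRing N n Δ v →ₗ[ℝ] ℝ)
    (hg : ∀ σ ∈ Δ, σ.card = d →
      g (Ideal.Quotient.mkₐ ℝ (chowIdeal N n Δ v) (∏ k ∈ σ, X k)) = 0) :
    ∀ (c : ℕ) (m : Fin N →₀ ℕ), N - m.support.card = c → m.degree = d →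
      g (Ideal.Quotient.mkₐ ℝ (chowIdeal N n Δ v) (monomial m 1)) = 0 := by
  obtain ⟨L, hL⟩ := exists_dual_family N n Δ v hindep
  intro c
  induction c using Nat.strong_induction_on with
  | _ c ih =>
  intro m hc hd
  by_cases hm : m.support ∈ Δ
  swap
  · have : Ideal.Quotient.mkₐ ℝ (chowIdeal N n Δ v) (monomial m (1 : ℝ)) = 0 :=
      Ideal.Quotient.eq_zero_iff_mem.mpr (nonface_mem N n Δ v m hm)
    rw [this, map_zero]
  by_cases hsq : ∃ k, 2 ≤ m k
  · obtain ⟨k, hk⟩ := hsq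
    have hkm : k ∈ m.support := by rw [Finsupp.mem_support_iff]; omega
    have h := rel_of_functional N n Δ v g (m - Finsupp.single k 1) (L m.support k)
    rw [Finset.sum_eq_single k] at h
    · rw [hL _ hm k hkm k hkm, if_pos rfl, one_mul, sub_add m k (by omega)] at h
      exact h
    · intro a _ hak
      by_cases ha : a ∈ m.support
      · rw [hL _ hm k hkm a ha, if_neg hak, zero_mul]
      · rw [ih (N - (m - Finsupp.single k 1 + Finsupp.single a 1).support.card) ?_ _ rfl ?_,
          mul_zero]
        · have := Finset.card_le_univ (insert a m.support)
          rw [supp_add, supp_sub m k hk]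
          rw [Finset.card_insert_of_notMem ha, Fintype.card_fin] at *
          omega
        · have := congrArg Finsupp.degree (sub_add m k (by omega))
          rw [map_add, Finsupp.degree_single] at this
          rw [map_add, Finsupp.degree_single]
          omega
    · simp
  · push Not at hsq
    have h1 : ∀ k, m k ≤ 1 := fun k => by have := hsq k; omega
    have hcard : m.support.card = m.degree := by
      rw [Finsupp.degree_apply, Finset.card_eq_sum_ones]
      refine Finset.sum_congr rfl fun k hk => ?_
      rw [Finsupp.mem_support_iff] at hk
      have := h1 k
      omega
    rw [eq_sum_single N m h1, ← prod_X_eq]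
    exact hg _ hm (by omega)

lemma phi_injective
    (hindep : ∀ σ ∈ Δ, LinearIndependent ℝ (fun k : {x : Fin N // x ∈ σ} => v k)) :
    Function.Injective (PhiMap N n d Δ v) := by
  rw [injective_iff_map_eq_zero]
  intro f hf
  obtain ⟨g, hg⟩ := LinearMap.exists_extend f
  have hgf : ∀ x : chowDeg N n d Δ v, g x = f x := fun x => LinearMap.congr_fun hg x
  have key := inj_aux N n d Δ v hindep g (by
    intro σ hσ hc
    have h1 := congrFun hf ⟨σ, hσ, hc⟩
    have h2 := hgf (faceClass N n d Δ v ⟨σ, hσ, hc⟩)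
    exact h2.trans h1)
  ext ⟨x, hx⟩
  rw [← hgf]
  obtain ⟨p, hp, rfl⟩ := hx
  simp only [AlgHom.toLinearMap_apply, LinearMap.zero_apply]
  have hp' : p.IsHomogeneous d := hp
  rw [p.as_sum, map_sum, map_sum]
  refine Finset.sum_eq_zero fun m hm => ?_
  have hmd : m.degree = d := by
    rw [mem_support_iff] at hm
    have := hp' hm
    rw [← this, Finsupp.degree_eq_weight_one]; rfl
  have : monomial m (coeff m p) = coeff m p • monomial m (1 : ℝ) := by
    rw [smul_monomial]; simp
  rw [this, map_smul, map_smul, key _ m rfl hmd, smul_zero]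

open Classical in
/-- extension by zero -/
def extW (w : FaceD N d Δ → ℝ) (S : Finset (Fin N)) : ℝ :=
  if h : S ∈ Δ ∧ S.card = d then w ⟨S, h⟩ else 0

lemma sum_eq (w : FaceD N d Δ → ℝ) (τ : Finset (Fin N)) (hc : τ.card + 1 = d)
    (l : (Fin n → ℝ) →ₗ[ℝ] ℝ) :
    l (∑ σ : FaceD N d Δ, (if τ ⊆ σ.1 then w σ else 0) • ∑ k ∈ σ.1 \ τ, v k)
      = ∑ a ∈ τᶜ, l (v a) * extW N d Δ w (insert a τ) := by
  classical
  rw [map_sum]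
  have h1 : ∀ a ∈ τᶜ, l (v a) * extW N d Δ w (insert a τ)
      = ∑ σ : FaceD N d Δ, if σ.1 = insert a τ then l (v a) * w σ else 0 := by
    intro a ha
    unfold extW
    split_ifs with h
    · rw [Finset.sum_eq_single ⟨insert a τ, h⟩]
      · simp
      · rintro ⟨σ, hσ⟩ _ hne
        rw [if_neg]
        intro h'
        exact hne (Subtype.ext h')
      · simp
    · rw [mul_zero, Finset.sum_eq_zero]
      intro σ _
      rw [if_neg]
      intro h'
      exact h (h' ▸ σ.2)
  rw [Finset.sum_congr rfl h1, Finset.sum_comm]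
  refine Finset.sum_congr rfl fun σ _ => ?_
  rw [map_smul, smul_eq_mul, map_sum]
  split_ifs with hτ
  · have hcard : (σ.1 \ τ).card = 1 := by
      rw [Finset.card_sdiff_of_subset hτ, σ.2.2]; omega
    obtain ⟨b, hb⟩ := Finset.card_eq_one.mp hcard
    have hσ : σ.1 = insert b τ := by
      rw [Finset.insert_eq, ← hb, Finset.sdiff_union_of_subset hτ]
    have hbτ : b ∉ τ := by
      have : b ∈ σ.1 \ τ := by rw [hb]; simp
      exact (Finset.mem_sdiff.mp this).2
    rw [hb, Finset.sum_singleton, Finset.sum_eq_single_of_mem b (by simpa using hbτ)]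
    · rw [if_pos hσ, mul_comm]
    · intro a ha hab
      rw [if_neg]
      intro h
      rw [hσ] at h
      have : a ∈ insert b τ := by rw [h]; simp
      rw [Finset.mem_insert] at this
      rw [Finset.mem_compl] at ha
      tauto
  · rw [zero_mul, Finset.sum_eq_zero]
    intro a _
    rw [if_neg]
    intro h
    exact hτ (h ▸ Finset.subset_insert _ _)

lemma range_subset (hcomplex : ∀ σ ∈ Δ, ∀ τ ⊆ σ, τ ∈ Δ) :
    Set.range (PhiMap N n d Δ v) ⊆ mwSet N n d Δ v := by
  rintro _ ⟨f, rfl⟩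
  intro τ hτ hc
  by_contra hnot
  obtain ⟨l, hl, hker⟩ := Submodule.exists_le_ker_of_notMem hnot
  apply hl
  obtain ⟨g, hg⟩ := LinearMap.exists_extend f
  have hgf : ∀ x : chowDeg N n d Δ v, g x = f x := fun x => LinearMap.congr_fun hg x
  rw [sum_eq N n d Δ v _ τ hc l]
  have h := rel_of_functional N n Δ v g (∑ k ∈ τ, Finsupp.single k 1) l
  rw [← Finset.sum_add_sum_compl τ, Finset.sum_eq_zero, zero_add] at h
  · rw [← h]
    refine Finset.sum_congr rfl fun a ha => ?_
    rw [Finset.mem_compl] at ha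
    congr 1
    have e : (∑ k ∈ τ, Finsupp.single k 1 : Fin N →₀ ℕ) + Finsupp.single a 1
        = ∑ k ∈ insert a τ, Finsupp.single k 1 := by
      rw [Finset.sum_insert ha, add_comm]
    rw [e]
    unfold extW
    split_ifs with hS
    · rw [← prod_X_eq]
      exact (hgf (faceClass N n d Δ v ⟨insert a τ, hS⟩)).symm
    · have hS' : insert a τ ∉ Δ := by
        intro h
        exact hS ⟨h, by rw [Finset.card_insert_of_notMem ha]; exact hc⟩
      have := nonface_mem N n Δ v (∑ k ∈ insert a τ, Finsupp.single k 1)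
        (by rwa [supp_sum_single])
      have h0 : Ideal.Quotient.mkₐ ℝ (chowIdeal N n Δ v)
        (monomial (∑ k ∈ insert a τ, Finsupp.single k 1) (1 : ℝ)) = 0 :=
        Ideal.Quotient.eq_zero_iff_mem.mpr this
      rw [h0, map_zero]
  · intro k hk
    have : l (v k) = 0 := hker (Submodule.subset_span ⟨k, hk, rfl⟩)
    rw [this, zero_mul]

lemma subset_range (hcomplex : ∀ σ ∈ Δ, ∀ τ ⊆ σ, τ ∈ Δ)
    (hindep : ∀ σ ∈ Δ, LinearIndependent ℝ (fun k : {x : Fin N // x ∈ σ} => v k)) :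
    mwSet N n d Δ v ⊆ Set.range (PhiMap N n d Δ v) := by
  intro w hw
  obtain ⟨L, hL⟩ := exists_dual_family N n Δ v hindep
  have hrel := relation (w := extW N d Δ w) hcomplex hL d
    (by
      intro S hS
      unfold extW
      rw [dif_neg]
      exact fun h => hS h.1)
    (by
      intro τ hτ hc l hl
      rw [← sum_eq N n d Δ v w τ hc l]
      have hle : Submodule.span ℝ (v '' ↑τ) ≤ LinearMap.ker l := by
        rw [Submodule.span_le]
        rintro _ ⟨k, hk, rfl⟩
        exact hl k hk
      exact hle (hw τ hτ hc))
  let F : (Fin N →₀ ℕ) → ℝ := fun m =>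
    if m.degree = d then phi N n Δ v (extW N d Δ w) L m else 0
  let Ψ : MvPolynomial (Fin N) ℝ →ₗ[ℝ] ℝ := (basisMonomials (Fin N) ℝ).constr ℝ F
  have hΨ : ∀ m, Ψ (monomial m 1) = F m := fun m => by
    have := (basisMonomials (Fin N) ℝ).constr_basis ℝ F m
    rwa [coe_basisMonomials] at this
  have hmon : ∀ (p : MvPolynomial (Fin N) ℝ),
      (∀ m, Ψ (monomial m 1 * p) = 0) → ∀ q, Ψ (q * p) = 0 := by
    intro p hp q
    rw [q.as_sum, Finset.sum_mul, map_sum]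
    refine Finset.sum_eq_zero fun m _ => ?_
    have : monomial m (coeff m q) = coeff m q • monomial m (1 : ℝ) := by
      rw [smul_monomial]; simp
    rw [this, smul_mul_assoc, map_smul, hp, smul_zero]
  have hspan : ∀ s : Set (MvPolynomial (Fin N) ℝ), (∀ p ∈ s, ∀ q, Ψ (q * p) = 0) →
      ∀ p ∈ Ideal.span s, Ψ p = 0 := by
    intro s hs p hp
    have : ∀ q, Ψ (q * p) = 0 := by
      induction hp using Submodule.span_induction with
      | mem x hx => exact hs x hx
      | zero => intro q; rw [mul_zero, map_zero]
      | add x y _ _ hx hy => intro q; rw [mul_add, map_add, hx, hy, add_zero]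
      | smul a x _ hx => intro q; rw [smul_eq_mul, ← mul_assoc]; exact hx _
    simpa using this 1
  have hkill : ∀ p ∈ chowIdeal N n Δ v, Ψ p = 0 := by
    intro p hp
    obtain ⟨a, ha, b, hb, rfl⟩ := Submodule.mem_sup.mp hp
    rw [map_add]
    have h1 : Ψ a = 0 := by
      refine hspan _ ?_ a ha
      rintro _ ⟨S, hS, rfl⟩
      refine hmon _ fun m => ?_
      rw [prod_X_eq, monomial_mul, one_mul, hΨ]
      simp only [F]
      rw [phi_zero, ite_self]
      intro h
      refine hS (hcomplex _ h _ ?_)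
      intro j hj
      rw [Finsupp.mem_support_iff, Finsupp.add_apply, sum_single_apply, if_pos hj]
      omega
    have h2 : Ψ b = 0 := by
      refine hspan _ ?_ b hb
      rintro _ ⟨j, rfl⟩
      refine hmon _ fun m => ?_
      have h3 : monomial m (1 : ℝ) * ∑ k, C (v k j) * X k
          = ∑ k, v k j • monomial (m + Finsupp.single k 1) (1 : ℝ) := by
        rw [Finset.mul_sum]
        refine Finset.sum_congr rfl fun k _ => ?_
        rw [X, C_mul_monomial, monomial_mul, smul_monomial]
        simp
      simp only [h3, map_sum, map_smul, hΨ, F, map_add, Finsupp.degree_single, smul_eq_mul]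
      by_cases hd : m.degree + 1 = d
      · simp only [hd, if_true]
        exact hrel _ m rfl hd (LinearMap.proj j)
      · simp [hd]
    rw [h1, h2, add_zero]
  let π := (Ideal.Quotient.mkₐ ℝ (chowIdeal N n Δ v)).toLinearMap
  have hsurj : Function.Surjective π := Ideal.Quotient.mkₐ_surjective ℝ _
  obtain ⟨s, hs⟩ := LinearMap.exists_rightInverse_of_surjective π
    (LinearMap.range_eq_top.mpr hsurj)
  have hfac : ∀ p, Ψ (s (π p)) = Ψ p := by
    intro p
    rw [← sub_eq_zero, ← map_sub]
    apply hkill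
    apply Ideal.Quotient.eq.mp
    exact LinearMap.congr_fun hs (π p)
  refine ⟨(Ψ ∘ₗ s) ∘ₗ (chowDeg N n d Δ v).subtype, ?_⟩
  ext σ
  have : Ψ (s (π (∏ k ∈ σ.1, X k))) = w σ := by
    rw [hfac, prod_X_eq, hΨ]
    simp only [F]
    rw [if_pos, phi_sqfree, supp_sum_single]
    · unfold extW
      rw [dif_pos σ.2]
    · rw [supp_sum_single]; exact σ.2.1
    · intro k; rw [sum_single_apply]; split_ifs <;> omega
    · rw [map_sum]; simp [σ.2.2]
  exact this

end

end MWProof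

/-- for a pure `d`-dimensional simplicial complex `Δ` whose cones
`cone(σ)`, `σ ∈ Δ`, are simplicial and form a fan in `ℝ^n`, the linear map
`Φ : (CH^d(Δ))* → MW_d(Δ)`, `Φ(φ) = (φ(∂_σ))_{σ∈Δ_d}`, is a linear isomorphism:
it is injective with image exactly the space of Minkowski weights of degree `d`. -/
theorem stmt0 (N n d : ℕ) (Δ : Finset (Finset (Fin N))) (v : Fin N → Fin n → ℝ)
    (hcomplex : ∀ σ ∈ Δ, ∀ τ ⊆ σ, τ ∈ Δ)
    (hpure : ∀ σ ∈ Δ, (∀ σ' ∈ Δ, σ ⊆ σ' → σ = σ') → σ.card = d)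
    (hindep : ∀ σ ∈ Δ, LinearIndependent ℝ (fun k : {x : Fin N // x ∈ σ} => v k))
    (hfan : ∀ σ ∈ Δ, ∀ σ' ∈ Δ,
      coneOf N n v σ ∩ coneOf N n v σ' = coneOf N n v (σ ∩ σ')) :
    Function.Injective (PhiMap N n d Δ v) ∧
      Set.range (PhiMap N n d Δ v) = mwSet N n d Δ v := by
  exact ⟨MWProof.phi_injective N n d Δ v hindep,
    Set.Subset.antisymm (MWProof.range_subset N n d Δ v hcomplex)
      (MWProof.subset_range N n d Δ v hcomplex hindep)⟩

end
end

section
/- Let N ≥ 2 and let V ∈ ℝ[x_1,…,x_N]. If W and W′ in ℝ[x_0, x_1,…,x_N] both satisfy the three conditions (∂_1 − ∂_0)(∂_2 − ∂_0) W = 0, W|_{x_0=0} = V, and (∂_0 W)|_{x_0=0} = 0, then W = W′. In other words, the solution of this differential equation with these initial conditions is unique. -/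
open MvPolynomial

/-- The partial derivative `∂_i`, as a linear endomorphism of `ℝ[x_0,…,x_N]`. -/
noncomputable def pdOp (N : ℕ) (i : Fin (N + 1)) :
    MvPolynomial (Fin (N + 1)) ℝ →ₗ[ℝ] MvPolynomial (Fin (N + 1)) ℝ :=
  (pderiv i).toLinearMap

theorem sigma_coeff (N : ℕ) (P : MvPolynomial (Fin (N + 1)) ℝ) (m : Fin (N + 1) →₀ ℕ)
    (hm : m 0 = 0) :
    coeff m (aeval (fun k : Fin (N + 1) =>
      if k = 0 then 0 else (X k : MvPolynomial (Fin (N + 1)) ℝ)) P) = coeff m P := by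
  induction P using MvPolynomial.induction_on' with
  | add p q hp hq => simp only [map_add, coeff_add, hp, hq]
  | monomial s a =>
    rw [aeval_monomial]
    by_cases hs : s 0 = 0
    · have : (s.prod fun i k => (if i = 0 then 0 else
          (X i : MvPolynomial (Fin (N + 1)) ℝ)) ^ k) = s.prod fun i k => X i ^ k := by
        refine Finsupp.prod_congr ?_
        intro x hx
        have : x ≠ 0 := by
          rintro rfl
          exact (Finsupp.mem_support_iff.mp hx) hs
        simp [this]
      rw [this, monomial_eq]
      rfl
    · have : (s.prod fun i k => (if i = 0 then 0 else
          (X i : MvPolynomial (Fin (N + 1)) ℝ)) ^ k) = 0 := by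
        refine Finset.prod_eq_zero (i := 0) (Finsupp.mem_support_iff.mpr hs) ?_
        simp [hs]
      rw [this, mul_zero, coeff_zero, coeff_monomial, if_neg]
      rintro rfl
      exact hs hm

theorem pd_coeff (N : ℕ) (i : Fin (N + 1)) (P : MvPolynomial (Fin (N + 1)) ℝ)
    (m : Fin (N + 1) →₀ ℕ) :
    coeff m (pderiv i P) = coeff (m + Finsupp.single i 1) P * ((m i : ℝ) + 1) := by
  induction P using MvPolynomial.induction_on' with
  | add p q hp hq => simp only [map_add, coeff_add, hp, hq, add_mul]
  | monomial s a =>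
    rw [pderiv_monomial, coeff_monomial, coeff_monomial]
    by_cases h : s = m + Finsupp.single i 1
    · subst h
      simp
    · rw [if_neg h, zero_mul]
      split_ifs with h2
      · by_cases hs : s i = 0
        · simp [hs]
        · exfalso
          apply h
          rw [← h2, tsub_add_cancel_of_le]
          rw [Finsupp.single_le_iff]
          omega
      · rfl

theorem first_order (N : ℕ) (i : Fin (N + 1)) (hi : i ≠ 0) (U : MvPolynomial (Fin (N + 1)) ℝ)
    (h : (pdOp N i - pdOp N 0) U = 0) (h0 : ∀ m, m 0 = 0 → coeff m U = 0) : U = 0 := by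
  have h' : pderiv i U = pderiv 0 U := sub_eq_zero.mp h
  have key : ∀ k : ℕ, ∀ m : Fin (N + 1) →₀ ℕ, m 0 = k → coeff m U = 0 := by
    intro k
    induction k with
    | zero => exact h0
    | succ k ih =>
      intro m hm
      obtain ⟨m', rfl⟩ : ∃ m', m = m' + Finsupp.single 0 1 := by
        refine ⟨m - Finsupp.single 0 1, ?_⟩
        rw [tsub_add_cancel_of_le]
        rw [Finsupp.single_le_iff]
        omega
      have e := congrArg (coeff m') h'
      rw [pd_coeff, pd_coeff, ih (m' + Finsupp.single i 1), zero_mul] at e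
      · exact (mul_eq_zero.mp e.symm).resolve_right (by positivity)
      · simp at hm
        simp [hi, hm]
  ext m
  simpa using key _ m rfl

/-- uniqueness of the solution of `(∂_1 − ∂_0)(∂_2 − ∂_0) W = 0` with
initial conditions `W|_{x_0=0} = V` and `(∂_0 W)|_{x_0=0} = 0` in `ℝ[x_0,…,x_N]`
(`V ∈ ℝ[x_1,…,x_N]` is embedded via `rename Fin.succ`). -/
theorem stmt5 (N : ℕ) (hN : 2 ≤ N) (V : MvPolynomial (Fin N) ℝ)
    (W W' : MvPolynomial (Fin (N + 1)) ℝ)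
    (hW1 : (pdOp N ⟨1, by omega⟩ - pdOp N 0) ((pdOp N ⟨2, by omega⟩ - pdOp N 0) W) = 0)
    (hW2 : aeval (fun k : Fin (N + 1) => if k = 0 then 0 else X k) W = rename Fin.succ V)
    (hW3 : aeval (fun k : Fin (N + 1) =>
        if k = 0 then 0 else (X k : MvPolynomial (Fin (N + 1)) ℝ))
      (pderiv (0 : Fin (N + 1)) W) = 0)
    (hW'1 : (pdOp N ⟨1, by omega⟩ - pdOp N 0) ((pdOp N ⟨2, by omega⟩ - pdOp N 0) W') = 0)
    (hW'2 : aeval (fun k : Fin (N + 1) => if k = 0 then 0 else X k) W' = rename Fin.succ V)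
    (hW'3 : aeval (fun k : Fin (N + 1) =>
        if k = 0 then 0 else (X k : MvPolynomial (Fin (N + 1)) ℝ))
      (pderiv (0 : Fin (N + 1)) W') = 0) :
    W = W' := by
  have i1 : (⟨1, by omega⟩ : Fin (N + 1)) ≠ 0 := by simp [Fin.ext_iff]
  have i2 : (⟨2, by omega⟩ : Fin (N + 1)) ≠ 0 := by simp [Fin.ext_iff]
  have z : ∀ m : Fin (N + 1) →₀ ℕ, m 0 = 0 → coeff m (W - W') = 0 := by
    intro m hm
    rw [← sigma_coeff N _ m hm, map_sub, hW2, hW'2, sub_self, coeff_zero]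
  have z' : ∀ m : Fin (N + 1) →₀ ℕ, m 0 = 0 → coeff m (pderiv 0 (W - W')) = 0 := by
    intro m hm
    rw [← sigma_coeff N _ m hm, map_sub, map_sub, hW3, hW'3, sub_self, coeff_zero]
  refine sub_eq_zero.mp (first_order N _ i2 _ ?_ z)
  refine first_order N _ i1 _ ?_ ?_
  · rw [map_sub, map_sub, hW1, hW'1, sub_self]
  · intro m hm
    change coeff m (pderiv _ (W - W') - pderiv 0 (W - W')) = 0
    rw [coeff_sub, z' m hm, pd_coeff, z, zero_mul, sub_zero]
    simp [hm]
end

section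
/- Let S be a finite index set, let b : S → ℝ, and let V ∈ ℝ[(x_G)_{G∈S}]. Then there exists a unique polynomial W in the ring ℝ[x_i, x_e, (x_G)_{G∈S}] (with two distinguished variables x_i, x_e) satisfying all of the following: (i) ∂_i ∂_e W = 0; (ii) (∂_i − ∂_e − Σ_{G∈S} b_G ∂_G) W = 0; (iii) W|_{x_i=0, x_e=0} = 0; (iv) (∂_i W)|_{x_i=0, x_e=0} = V; and (v) (∂_e W)|_{x_i=0, x_e=0} = V. Equivalently, W is the unique solution of the differential equations (i) and (ii) whose expansion in x_i and x_e has the form W = (x_i + x_e)·V plus terms of total degree at least 2 in x_i and x_e. -/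
open MvPolynomial

/-- Substituting `0` for the two distinguished variables `x_i = X (Sum.inl 0)` and
`x_e = X (Sum.inl 1)` of `ℝ[x_i, x_e, (x_G)_{G∈S}]`. -/
noncomputable def sub00 (S : Type*) (P : MvPolynomial (Fin 2 ⊕ S) ℝ) :
    MvPolynomial (Fin 2 ⊕ S) ℝ :=
  aeval (Sum.elim (fun _ : Fin 2 => (0 : MvPolynomial (Fin 2 ⊕ S) ℝ))
    (fun G : S => X (Sum.inr G))) P

namespace Stmt8Aux

variable {S : Type*}

lemma sub00_add (p q : MvPolynomial (Fin 2 ⊕ S) ℝ) : sub00 S (p + q) = sub00 S p + sub00 S q := by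
  simp [sub00]

lemma sub00_sub (p q : MvPolynomial (Fin 2 ⊕ S) ℝ) : sub00 S (p - q) = sub00 S p - sub00 S q := by
  simp [sub00]

lemma sub00_mul (p q : MvPolynomial (Fin 2 ⊕ S) ℝ) : sub00 S (p * q) = sub00 S p * sub00 S q := by
  simp [sub00]

lemma sub00_C (a : ℝ) : sub00 S (C a) = C a := by
  simp [sub00, algebraMap_eq]

lemma sub00_inl (i : Fin 2) : sub00 S (X (Sum.inl i)) = 0 := by
  simp [sub00]

lemma sub00_inr (G : S) : sub00 S (X (Sum.inr G)) = X (Sum.inr G) := by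
  simp [sub00]

lemma sub00_rename (v : MvPolynomial S ℝ) :
    sub00 S (rename (Sum.inr : S → Fin 2 ⊕ S) v) = rename (Sum.inr : S → Fin 2 ⊕ S) v := by
  induction v using MvPolynomial.induction_on with
  | C a => simp [sub00_C]
  | add p q hp hq => simp [hp, hq, sub00_add]
  | mul_X p n hp => simp [hp, sub00_mul, sub00_inr]

lemma pderiv_inl_rename (i : Fin 2) (v : MvPolynomial S ℝ) :
    pderiv (Sum.inl i : Fin 2 ⊕ S) (rename (Sum.inr : S → Fin 2 ⊕ S) v) = 0 := by
  classical
  induction v using MvPolynomial.induction_on with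
  | C a => simp
  | add p q hp hq => simp [hp, hq]
  | mul_X p n hp => simp [hp, pderiv_X]

lemma pderiv_inr_rename (G : S) (v : MvPolynomial S ℝ) :
    pderiv (Sum.inr G : Fin 2 ⊕ S) (rename (Sum.inr : S → Fin 2 ⊕ S) v)
      = rename (Sum.inr : S → Fin 2 ⊕ S) (pderiv G v) :=
  pderiv_rename Sum.inr_injective _ _

lemma pderiv_comm' {σ : Type*} (i j : σ) (p : MvPolynomial σ ℝ) :
    pderiv i (pderiv j p) = pderiv j (pderiv i p) := by
  classical
  induction p using MvPolynomial.induction_on with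
  | C a => simp
  | add p q hp hq => simp [hp, hq]
  | mul_X p n hp =>
    simp only [Derivation.leibniz, map_add, smul_eq_mul, hp, pderiv_X, Pi.single_apply]
    split_ifs <;> simp <;> ring

lemma sub00_pderiv (G : S) (p : MvPolynomial (Fin 2 ⊕ S) ℝ) :
    sub00 S (pderiv (Sum.inr G) p) = pderiv (Sum.inr G) (sub00 S p) := by
  classical
  induction p using MvPolynomial.induction_on with
  | C a => simp [sub00, algebraMap_eq]
  | add p q hp hq => simp [hp, hq, sub00_add]
  | mul_X p n hp =>
    rcases n with i | H
    · simp [sub00_add, sub00_mul, hp, sub00_inl, pderiv_X, Pi.single_apply]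
    · by_cases h : H = G
      · subst h
        simp [sub00_add, sub00_mul, hp, sub00_inr]
      · simp [sub00_add, sub00_mul, hp, sub00_inr, pderiv_X, Pi.single_apply, h]

lemma coeff_sub00 (p : MvPolynomial (Fin 2 ⊕ S) ℝ) : ∀ m : (Fin 2 ⊕ S) →₀ ℕ,
    (∀ i, m (Sum.inl i) = 0) → coeff m (sub00 S p) = coeff m p := by
  classical
  induction p using MvPolynomial.induction_on with
  | C a => intro m _; rw [sub00_C]
  | add p q hp hq => intro m hm; simp [sub00_add, hp m hm, hq m hm]
  | mul_X p n hp =>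
    intro m hm
    rcases n with i | H
    · simp [sub00_mul, sub00_inl, coeff_mul_X', hm i]
    · rw [sub00_mul, sub00_inr, coeff_mul_X', coeff_mul_X']
      split_ifs
      · apply hp
        intro i
        simp [hm i]
      · rfl

lemma coeff_pderiv' {σ : Type*} (i : σ) (p : MvPolynomial σ ℝ) (m : σ →₀ ℕ) :
    coeff m (pderiv i p) = coeff (m + Finsupp.single i 1) p * (m i + 1) := by
  classical
  induction p using MvPolynomial.induction_on' with
  | add p q hp hq => simp [hp, hq]; ring
  | monomial u a =>
    rw [pderiv_monomial, coeff_monomial, coeff_monomial]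
    by_cases h : u = m + Finsupp.single i 1
    · subst h; simp
    · rw [if_neg h]
      by_cases hu : u i = 0
      · simp [hu]
      · rw [if_neg]
        · simp
        · rintro rfl
          apply h
          ext j
          by_cases hj : i = j
          · subst hj; simp; omega
          · simp [Finsupp.single_apply, hj]

/-- A family closed under both distinguished derivatives, vanishing at the origin of the two
distinguished variables, is zero. -/
lemma eq_zero_of_closed (Q : MvPolynomial (Fin 2 ⊕ S) ℝ → Prop)
    (h0 : ∀ p, Q p → sub00 S p = 0)
    (hd : ∀ i p, Q p → Q (pderiv (Sum.inl i) p)) :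
    ∀ p, Q p → p = 0 := by
  have key : ∀ (k : ℕ) (m : (Fin 2 ⊕ S) →₀ ℕ), m (Sum.inl 0) + m (Sum.inl 1) = k →
      ∀ p, Q p → coeff m p = 0 := by
    intro k
    induction k with
    | zero =>
      intro m hm p hp
      rw [← coeff_sub00 p m, h0 p hp, coeff_zero]
      intro i
      fin_cases i <;> simp <;> omega
    | succ k ih =>
      intro m hm p hp
      obtain ⟨i, hi⟩ : ∃ i : Fin 2, m (Sum.inl i) ≠ 0 := by
        by_contra! h
        have := h 0
        have := h 1
        omega
      have hle : Finsupp.single (Sum.inl i) 1 ≤ m := by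
        simp; omega
      have e : m - Finsupp.single (Sum.inl i) 1 + Finsupp.single (Sum.inl i) 1 = m :=
        tsub_add_cancel_of_le hle
      have h := ih (m - Finsupp.single (Sum.inl i) 1) (by
        fin_cases i <;> simp at hi ⊢ <;> omega) _ (hd i p hp)
      rw [coeff_pderiv', e] at h
      rcases mul_eq_zero.1 h with h | h
      · exact h
      · exfalso
        have : (0 : ℝ) < (((m - Finsupp.single (Sum.inl i) 1 : (Fin 2 ⊕ S) →₀ ℕ) (Sum.inl i) : ℕ) : ℝ) + 1 := by positivity
        linarith
  intro p hp
  ext m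
  rw [coeff_zero]
  exact key _ m rfl p hp

section nil

variable [Fintype S] (b : S → ℝ)

/-- The derivation `Σ b_G ∂_G` on `ℝ[x_G]`. -/
noncomputable def D0 : Derivation ℝ (MvPolynomial S ℝ) (MvPolynomial S ℝ) :=
  ∑ G : S, b G • pderiv G

/-- The derivation `Σ b_G ∂_G` on the big ring. -/
noncomputable def D1 : Derivation ℝ (MvPolynomial (Fin 2 ⊕ S) ℝ) (MvPolynomial (Fin 2 ⊕ S) ℝ) :=
  ∑ G : S, b G • pderiv (Sum.inr G)

lemma D0_apply (p : MvPolynomial S ℝ) : D0 b p = ∑ G : S, b G • pderiv G p := by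
  have h := map_sum (Derivation.coeFnAddMonoidHom (R := ℝ) (A := MvPolynomial S ℝ)
    (M := MvPolynomial S ℝ)) (fun G : S => b G • pderiv G) Finset.univ
  have h' := congrFun h p
  rw [Finset.sum_apply] at h'
  exact h'

lemma D1_apply (p : MvPolynomial (Fin 2 ⊕ S) ℝ) :
    D1 b p = ∑ G : S, b G • pderiv (Sum.inr G) p := by
  have h := map_sum (Derivation.coeFnAddMonoidHom (R := ℝ) (A := MvPolynomial (Fin 2 ⊕ S) ℝ)
    (M := MvPolynomial (Fin 2 ⊕ S) ℝ)) (fun G : S => b G • pderiv (Sum.inr G)) Finset.univ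
  have h' := congrFun h p
  rw [Finset.sum_apply] at h'
  exact h'

lemma D0_X (G : S) : D0 b (X G) = C (b G) := by
  classical
  simp [D0_apply, pderiv_X, Pi.single_apply, smul_eq_C_mul]

lemma D1_inl (i : Fin 2) : D1 b (X (Sum.inl i)) = 0 := by
  classical
  simp [D1_apply, pderiv_X, Pi.single_apply]

lemma D1_rename (v : MvPolynomial S ℝ) :
    D1 b (rename Sum.inr v) = rename Sum.inr (D0 b v) := by
  simp [D1_apply, D0_apply, pderiv_inr_rename]

lemma iter_add (n : ℕ) (p q : MvPolynomial S ℝ) :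
    (D0 b)^[n] (p + q) = (D0 b)^[n] p + (D0 b)^[n] q :=
  iterate_map_add (D0 b) n p q

lemma iter_zero (n : ℕ) : (D0 b)^[n] 0 = 0 := iterate_map_zero (D0 b) n

lemma iter_C_mul (n : ℕ) (a : ℝ) (p : MvPolynomial S ℝ) :
    (D0 b)^[n] (C a * p) = C a * (D0 b)^[n] p := by
  induction n generalizing p with
  | zero => rfl
  | succ n ih =>
    rw [Function.iterate_succ_apply, Function.iterate_succ_apply, ← ih]
    simp [← smul_eq_C_mul]

lemma iter_mul_X (G : S) (n : ℕ) : ∀ p : MvPolynomial S ℝ, (D0 b)^[n] p = 0 →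
    (D0 b)^[n + 1] (p * X G) = 0 := by
  induction n with
  | zero =>
    intro p hp
    have : p = 0 := hp
    subst this
    simp
  | succ n ih =>
    intro p hp
    have e : D0 b (p * X G) = D0 b p * X G + C (b G) * p := by
      rw [Derivation.leibniz, D0_X, smul_eq_mul, smul_eq_mul]; ring
    rw [Function.iterate_succ_apply, e, iter_add, iter_C_mul, hp, mul_zero, add_zero]
    exact ih _ hp

lemma iter_of_le {m n : ℕ} (h : m ≤ n) (p : MvPolynomial S ℝ) (hp : (D0 b)^[m] p = 0) :
    (D0 b)^[n] p = 0 := by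
  obtain ⟨k, rfl⟩ := Nat.exists_eq_add_of_le' h
  rw [Function.iterate_add_apply, hp, iter_zero]

lemma exists_nil (p : MvPolynomial S ℝ) : ∃ n, (D0 b)^[n] p = 0 := by
  induction p using MvPolynomial.induction_on with
  | C a => exact ⟨1, by simp⟩
  | add p q hp hq =>
    obtain ⟨m, hm⟩ := hp
    obtain ⟨n, hn⟩ := hq
    refine ⟨max m n, ?_⟩
    rw [iter_add, iter_of_le b (le_max_left _ _) p hm, iter_of_le b (le_max_right _ _) q hn,
      add_zero]
  | mul_X p G hp =>
    obtain ⟨n, hn⟩ := hp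
    exact ⟨n + 1, iter_mul_X b G n p hn⟩

lemma sub00_D1 (p : MvPolynomial (Fin 2 ⊕ S) ℝ) (hp : sub00 S p = 0) :
    sub00 S (D1 b p) = 0 := by
  have : ∀ G, sub00 S (pderiv (Sum.inr G) p) = 0 := fun G => by
    rw [sub00_pderiv, hp, map_zero]
  rw [D1_apply]
  simp only [sub00] at this ⊢
  rw [map_sum]
  exact Finset.sum_eq_zero fun G _ => by rw [map_smul, this, smul_zero]

lemma pderiv_D1 (i : Fin 2 ⊕ S) (p : MvPolynomial (Fin 2 ⊕ S) ℝ) :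
    pderiv i (D1 b p) = D1 b (pderiv i p) := by
  simp only [D1_apply, map_sum, Derivation.map_smul]
  exact Finset.sum_congr rfl fun G _ => by rw [pderiv_comm']

/-- homogeneous system -/
def Hom (U : MvPolynomial (Fin 2 ⊕ S) ℝ) : Prop :=
  pderiv (Sum.inl 0 : Fin 2 ⊕ S) (pderiv (Sum.inl 1 : Fin 2 ⊕ S) U) = 0 ∧
  pderiv (Sum.inl 0 : Fin 2 ⊕ S) U - pderiv (Sum.inl 1 : Fin 2 ⊕ S) U - D1 b U = 0 ∧
  sub00 S U = 0 ∧
  sub00 S (pderiv (Sum.inl 0 : Fin 2 ⊕ S) U) = 0 ∧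
  sub00 S (pderiv (Sum.inl 1 : Fin 2 ⊕ S) U) = 0

lemma sub00_zero : sub00 S 0 = 0 := by simp [sub00]

lemma Hom.eq_zero (U : MvPolynomial (Fin 2 ⊕ S) ℝ) (hU : Hom b U) : U = 0 := by
  refine eq_zero_of_closed (Hom b) (fun p h => h.2.2.1) ?_ U hU
  intro i p hp
  obtain ⟨h1, h2, h3, h4, h5⟩ := hp
  have h1' : pderiv (Sum.inl 1 : Fin 2 ⊕ S) (pderiv (Sum.inl 0 : Fin 2 ⊕ S) p) = 0 := by
    rw [pderiv_comm', h1]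
  have e0 := congrArg (pderiv (Sum.inl 0 : Fin 2 ⊕ S)) h2
  have e1 := congrArg (pderiv (Sum.inl 1 : Fin 2 ⊕ S)) h2
  simp only [map_sub, map_zero, pderiv_D1, h1, h1'] at e0 e1
  match i with
  | 0 =>
    refine ⟨by rw [h1', map_zero], by rw [h1']; exact e0, h4, ?_, by rw [h1', sub00_zero]⟩
    rw [sub_zero] at e0
    rw [sub_eq_zero.1 e0]
    exact sub00_D1 b _ h4
  | 1 =>
    refine ⟨by rw [pderiv_comm', h1, map_zero], by rw [h1]; exact e1, h5,
      by rw [h1, sub00_zero], ?_⟩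
    have : pderiv (Sum.inl 1 : Fin 2 ⊕ S) (pderiv (Sum.inl 1 : Fin 2 ⊕ S) p)
        = 0 - D1 b (pderiv (Sum.inl 1 : Fin 2 ⊕ S) p) := by
      linear_combination -e1
    rw [this, sub00_sub, sub00_zero, sub00_D1 b _ h5, sub_zero]

end nil

section ex

variable [Fintype S] (b : S → ℝ) (V : MvPolynomial S ℝ)

/-- `D^n V` in the big ring -/
noncomputable def vv (n : ℕ) : MvPolynomial (Fin 2 ⊕ S) ℝ := rename Sum.inr ((D0 b)^[n] V)

/-- `x^n / n! * D^n V` -/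
noncomputable def ff (x : MvPolynomial (Fin 2 ⊕ S) ℝ) (n : ℕ) : MvPolynomial (Fin 2 ⊕ S) ℝ :=
  C ((n.factorial : ℝ)⁻¹) * x ^ n * vv b V n

/-- `x^(n+1) / (n+1)! * D^n V` -/
noncomputable def gg (x : MvPolynomial (Fin 2 ⊕ S) ℝ) (n : ℕ) : MvPolynomial (Fin 2 ⊕ S) ℝ :=
  C (((n + 1).factorial : ℝ)⁻¹) * x ^ (n + 1) * vv b V n

lemma D1_gg (x : MvPolynomial (Fin 2 ⊕ S) ℝ) (hx : D1 b x = 0) (n : ℕ) :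
    D1 b (gg b V x n) = ff b V x (n + 1) := by
  have : D1 b (vv b V n) = vv b V (n + 1) := by
    rw [vv, vv, D1_rename, Function.iterate_succ_apply']
  simp [gg, ff, Derivation.leibniz, Derivation.leibniz_pow, hx, this, Derivation.map_algebraMap,
    ← algebraMap_eq]

lemma pderiv_gg (i : Fin 2) (x : MvPolynomial (Fin 2 ⊕ S) ℝ) (n : ℕ) :
    pderiv (Sum.inl i) (gg b V x n) = pderiv (Sum.inl i) x * ff b V x n := by
  have h : pderiv (Sum.inl i) (vv b V n) = 0 := pderiv_inl_rename i _
  have hf : (C ((n.factorial : ℝ)⁻¹) : MvPolynomial (Fin 2 ⊕ S) ℝ)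
      = C (((n + 1).factorial : ℝ)⁻¹) * ((n : MvPolynomial (Fin 2 ⊕ S) ℝ) + 1) := by
    have : ((n : MvPolynomial (Fin 2 ⊕ S) ℝ) + 1) = C ((n : ℝ) + 1) := by simp
    rw [this, ← C_mul, Nat.factorial_succ]
    congr 1
    have : (n.factorial : ℝ) ≠ 0 := by positivity
    have : (n : ℝ) + 1 ≠ 0 := by positivity
    push_cast
    field_simp
  rw [ff, hf]
  simp [gg, Derivation.leibniz, Derivation.leibniz_pow, h]
  ring

lemma sub00_sum (s : Finset ℕ) (f : ℕ → MvPolynomial (Fin 2 ⊕ S) ℝ) :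
    sub00 S (∑ n ∈ s, f n) = ∑ n ∈ s, sub00 S (f n) := by
  simp [sub00]

lemma sub00_pow (p : MvPolynomial (Fin 2 ⊕ S) ℝ) (n : ℕ) : sub00 S (p ^ n) = sub00 S p ^ n := by
  simp [sub00]

lemma sub00_gg (x : MvPolynomial (Fin 2 ⊕ S) ℝ) (hx : sub00 S x = 0) (n : ℕ) :
    sub00 S (gg b V x n) = 0 := by
  simp [gg, sub00_mul, sub00_pow, hx]

lemma sub00_sum_ff (x : MvPolynomial (Fin 2 ⊕ S) ℝ) (hx : sub00 S x = 0) (N : ℕ) :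
    sub00 S (∑ n ∈ Finset.range (N + 1), ff b V x n) = rename Sum.inr V := by
  rw [sub00_sum, Finset.sum_range_succ', Finset.sum_eq_zero]
  · simp [ff, vv, sub00_rename]
  · intro n _
    simp [ff, sub00_mul, sub00_pow, hx]

end ex

end Stmt8Aux

open Stmt8Aux

/-- there is a unique polynomial `W` in `ℝ[x_i, x_e, (x_G)_{G∈S}]`
(with `x_i = X (Sum.inl 0)`, `x_e = X (Sum.inl 1)`) satisfying
(i) `∂_i ∂_e W = 0`, (ii) `(∂_i − ∂_e − Σ_G b_G ∂_G) W = 0`,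
(iii) `W|_{x_i=0,x_e=0} = 0`, (iv) `(∂_i W)|_{x_i=0,x_e=0} = V`, and
(v) `(∂_e W)|_{x_i=0,x_e=0} = V`. -/
theorem stmt8 (S : Type*) [Fintype S] [DecidableEq S] (b : S → ℝ) (V : MvPolynomial S ℝ) :
    ∃! W : MvPolynomial (Fin 2 ⊕ S) ℝ,
      pderiv (Sum.inl 0 : Fin 2 ⊕ S) (pderiv (Sum.inl 1 : Fin 2 ⊕ S) W) = 0 ∧
      pderiv (Sum.inl 0 : Fin 2 ⊕ S) W - pderiv (Sum.inl 1 : Fin 2 ⊕ S) W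
          - ∑ G : S, b G • pderiv (Sum.inr G) W = 0 ∧
      sub00 S W = 0 ∧
      sub00 S (pderiv (Sum.inl 0 : Fin 2 ⊕ S) W) = rename (Sum.inr : S → Fin 2 ⊕ S) V ∧
      sub00 S (pderiv (Sum.inl 1 : Fin 2 ⊕ S) W) = rename (Sum.inr : S → Fin 2 ⊕ S) V := by
  simp only [← D1_apply]
  obtain ⟨N, hN⟩ := exists_nil b V
  set xi : MvPolynomial (Fin 2 ⊕ S) ℝ := X (Sum.inl 0) with hxi
  set xe : MvPolynomial (Fin 2 ⊕ S) ℝ := - X (Sum.inl 1) with hxe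
  have si : sub00 S xi = 0 := sub00_inl 0
  have se : sub00 S xe = 0 := by
    have := sub00_sub (S := S) 0 (X (Sum.inl 1))
    rwa [sub00_inl, sub00_zero, zero_sub, sub_zero] at this
  have Di : D1 b xi = 0 := D1_inl b 0
  have De : D1 b xe = 0 := by rw [hxe, map_neg, D1_inl, neg_zero]
  have p00 : pderiv (Sum.inl 0) xi = 1 := by simp [hxi]
  have p10 : pderiv (Sum.inl 1) xi = 0 := by simp [hxi, pderiv_X, Pi.single_apply]
  have p01 : pderiv (Sum.inl 0) xe = 0 := by simp [hxe, pderiv_X, Pi.single_apply]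
  have p11 : pderiv (Sum.inl 1) xe = -1 := by simp [hxe]
  have d0 : pderiv (Sum.inl 0) (∑ n ∈ Finset.range (N + 1), (gg b V xi n - gg b V xe n))
      = ∑ n ∈ Finset.range (N + 1), ff b V xi n := by
    rw [map_sum]
    exact Finset.sum_congr rfl fun n _ => by simp [pderiv_gg, p00, p01]
  have d1 : pderiv (Sum.inl 1) (∑ n ∈ Finset.range (N + 1), (gg b V xi n - gg b V xe n))
      = ∑ n ∈ Finset.range (N + 1), ff b V xe n := by
    rw [map_sum]
    exact Finset.sum_congr rfl fun n _ => by simp [pderiv_gg, p10, p11]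
  refine existsUnique_of_exists_of_unique
    ⟨∑ n ∈ Finset.range (N + 1), (gg b V xi n - gg b V xe n), ?_, ?_, ?_, ?_, ?_⟩ ?_
  · rw [d1, map_sum]
    refine Finset.sum_eq_zero fun n _ => ?_
    have h : pderiv (Sum.inl 0) (vv b V n) = 0 := pderiv_inl_rename 0 _
    simp [ff, Derivation.leibniz, Derivation.leibniz_pow, h, p01]
  · rw [d0, d1, map_sum, ← Finset.sum_sub_distrib]
    simp only [map_sub, D1_gg b V xi Di, D1_gg b V xe De]
    have h0 : ff b V xi 0 - ff b V xe 0 = 0 := by simp [ff]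
    have hv : vv b V (N + 1) = 0 := by
      rw [vv, iter_of_le b (Nat.le_succ N) V hN, map_zero]
    have h1 : ff b V xi (N + 1) - ff b V xe (N + 1) = 0 := by simp [ff, hv]
    rw [Finset.sum_range_succ' , Finset.sum_range_succ (fun n => ff b V xi (n + 1) - _), h0, h1,
      add_zero, sub_self]
  · rw [sub00_sum]
    exact Finset.sum_eq_zero fun n _ => by
      rw [sub00_sub, sub00_gg b V xi si, sub00_gg b V xe se, sub_zero]
  · rw [d0, sub00_sum_ff b V xi si]
  · rw [d1, sub00_sum_ff b V xe se]
  · rintro W W' ⟨h1, h2, h3, h4, h5⟩ ⟨h1', h2', h3', h4', h5'⟩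
    refine sub_eq_zero.1 (Hom.eq_zero b (W - W') ⟨?_, ?_, ?_, ?_, ?_⟩)
    · rw [map_sub, map_sub, h1, h1', sub_zero]
    · simp only [map_sub]
      linear_combination h2 - h2'
    · rw [sub00_sub, h3, h3', sub_zero]
    · rw [map_sub, sub00_sub, h4, h4', sub_self]
    · rw [map_sub, sub00_sub, h5, h5', sub_self]
end
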